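/- arXiv:1804.07277 — 5 statements merged into one kernel-verified Lean document; each statement's English description precedes it below -/
import Mathlib

section
/- If F : (ℕ → ℕ) → ℕ is continuous with respect to the Baire topology, then the Spector tree 𝒯^S(F) is well-founded. -/
/-- The function `[x⃗ j^ω]` extending a finite sequence by the constant `j`. -/
def extSeq (x : List ℕ) (j : ℕ) : ℕ → ℕ := fun i => x.getD i j

/-- The Spector bar condition: `F([x⃗ 0^ω]) < |x⃗|`. -/
def SpecBar (F : (ℕ → ℕ) → ℕ) (x : List ℕ) : Prop :=
  F (extSeq x 0) < x.length

/-- The Kohlenbach bar condition: `F([x⃗ 0^ω]) = F([x⃗ 1^ω])`. -/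
def KohBar (F : (ℕ → ℕ) → ℕ) (x : List ℕ) : Prop :=
  F (extSeq x 0) = F (extSeq x 1)

/-- The Spector tree of `F`: sequences none of whose proper prefixes
satisfy the Spector bar condition. -/
def SpecTree (F : (ℕ → ℕ) → ℕ) : Set (List ℕ) :=
  {x | ∀ y, y <+: x → y ≠ x → ¬ SpecBar F y}

/-- The Kohlenbach tree of `F`. -/
def KohTree (F : (ℕ → ℕ) → ℕ) : Set (List ℕ) :=
  {x | ∀ y, y <+: x → y ≠ x → ¬ KohBar F y}

/-- `x` is a leaf of `T`. -/
def LeafNode (T : Set (List ℕ)) (x : List ℕ) : Prop :=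
  x ∈ T ∧ ∀ y : ℕ, x ++ [y] ∉ T

/-- `x` is an internal node of `T`. -/
def InternalNode (T : Set (List ℕ)) (x : List ℕ) : Prop :=
  x ∈ T ∧ ∀ y : ℕ, x ++ [y] ∈ T

/-- `T` is a tree: nonempty, prefix-closed, and every node is a leaf or internal. -/
def IsTree (T : Set (List ℕ)) : Prop :=
  T.Nonempty ∧ (∀ x ∈ T, ∀ y, y <+: x → y ∈ T) ∧
    ∀ x ∈ T, LeafNode T x ∨ InternalNode T x

/-- `T` is well-founded: no infinite sequence all of whose initial segments lie in `T`. -/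
def WFTree (T : Set (List ℕ)) : Prop :=
  ¬ ∃ x : ℕ → ℕ, ∀ i : ℕ, (List.range i).map x ∈ T

/-- The odd part `θ(n)` of a natural number. -/
def oddPart (n : ℕ) : ℕ := n / 2 ^ (n.factorization 2)

theorem spector_tree_wf_of_continuous (F : (ℕ → ℕ) → ℕ) (hF : Continuous F) :
    WFTree (SpecTree F) := by
  rintro ⟨x, hx⟩
  have ht : Filter.Tendsto (fun n : ℕ => extSeq ((List.range n).map x) 0) Filter.atTop
      (nhds x) := by
    rw [tendsto_pi_nhds]
    intro i
    apply tendsto_const_nhds.congr'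
    filter_upwards [Filter.eventually_gt_atTop i] with n hn
    simp [extSeq, List.getD, hn]
  have h2 := (hF.tendsto x).comp ht
  rw [nhds_discrete, Filter.tendsto_pure] at h2
  obtain ⟨n, hn, hlt⟩ := (h2.and (Filter.eventually_gt_atTop (F x))).exists
  refine hx (n + 1) ((List.range n).map x) ?_ ?_ ?_
  · rw [List.range_succ, List.map_append]
    exact List.prefix_append _ _
  · intro h
    have := congrArg List.length h
    simp at this
  · simp only [Function.comp] at hn
    simp only [SpecBar, hn, List.length_map, List.length_range]
    exact hlt
end

section
/- If F : (ℕ → ℕ) → ℕ is continuous with respect to the Baire topology, then the Kohlenbach tree 𝒯^K(F) is well-founded. -/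
theorem kohlenbach_tree_wf_of_continuous (F : (ℕ → ℕ) → ℕ) (hF : Continuous F) :
    WFTree (KohTree F) := by
  rintro ⟨x, hx⟩
  have key : ∀ j : ℕ, ∀ᶠ n in Filter.atTop,
      F (extSeq ((List.range n).map x) j) = F x := by
    intro j
    have ht : Filter.Tendsto (fun n => extSeq ((List.range n).map x) j)
        Filter.atTop (nhds x) := by
      rw [tendsto_pi_nhds]
      intro i
      apply tendsto_const_nhds.congr'
      filter_upwards [Filter.eventually_gt_atTop i] with n hn
      simp [extSeq, List.getD, hn]
    have h2 := (hF.tendsto x).comp ht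
    rw [nhds_discrete, Filter.tendsto_pure] at h2
    exact h2
  obtain ⟨n, h0, h1⟩ := ((key 0).and (key 1)).exists
  refine hx (n + 1) ((List.range n).map x) ?_ ?_ (h0.trans h1.symm)
  · rw [List.range_succ, List.map_append]
    exact List.prefix_append _ _
  · intro h
    have := congrArg List.length h
    simp at this
end

section
/- Let F : (ℕ → ℕ) → ℕ be such that the Kohlenbach tree 𝒯^K(F) is well-founded and the empty sequence does not satisfy the Kohlenbach bar condition, i.e. F(λi.0) ≠ F(λi.1). Define U F : (ℕ → ℕ) → ℕ by U F (g) = r₀(g) − 1 (truncated subtraction), where r₀(g) is the least r such that (g(0),…,g(r−1)) satisfies the Kohlenbach bar condition with respect to F (such r exists by well-foundedness of 𝒯^K(F)). Then the Spector tree of U F equals the Kohlenbach tree of F: 𝒯^S(U F) = 𝒯^K(F). -/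
theorem map_extSeq_eq_take (y : List ℕ) (r : ℕ) (h : r ≤ y.length) :
    (List.range r).map (extSeq y 0) = y.take r := by
  apply List.ext_getElem
  · simp [h]
  · intro i h1 h2
    have h3 : i < r := by simpa using h1
    have h4 : i < y.length := by omega
    simp [extSeq, h4]

theorem spector_tree_of_U_eq_kohlenbach_tree (F : (ℕ → ℕ) → ℕ)
    (hwf : WFTree (KohTree F))
    (hne : F (fun _ => 0) ≠ F (fun _ => 1))
    (U : (ℕ → ℕ) → ℕ)
    (hU : ∀ g : ℕ → ℕ, ∃ r : ℕ,
      KohBar F ((List.range r).map g) ∧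
      (∀ r' < r, ¬ KohBar F ((List.range r').map g)) ∧
      U g = r - 1) :
    SpecTree U = KohTree F := by
  have hnil : ¬ KohBar F [] := fun h => hne h
  have key : ∀ y, SpecBar U y ↔ ∃ r, r ≤ y.length ∧ KohBar F (y.take r) := by
    intro y
    obtain ⟨r, hr, hmin, hUr⟩ := hU (extSeq y 0)
    have hr0 : r ≠ 0 := by
      rintro rfl
      exact hnil (by simpa using hr)
    unfold SpecBar
    rw [hUr]
    constructor
    · intro h
      have hle : r ≤ y.length := by omega
      exact ⟨r, hle, by rwa [map_extSeq_eq_take y r hle] at hr⟩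
    · rintro ⟨s, hs, hk⟩
      have : r ≤ s := by
        by_contra hlt
        exact hmin s (by omega) (by rwa [map_extSeq_eq_take y s hs])
      omega
  ext x
  constructor
  · intro hx y hy hyx hk
    exact hx y hy hyx ((key y).2 ⟨y.length, le_rfl, by simpa using hk⟩)
  · intro hx y hy hyx hk
    obtain ⟨r, hr, hk⟩ := (key y).1 hk
    refine hx (y.take r) ((List.take_prefix r y).trans hy) ?_ hk
    intro he
    apply hyx
    have h1 : x <+: y := he ▸ List.take_prefix r y
    exact hy.eq_of_length (le_antisymm hy.length_le h1.length_le)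
end

section
/- Let 𝒯 be a well-founded tree and c an injective function from finite sequences of naturals to ℕ, and let φ₀ be the unique function on 𝒯 satisfying φ₀(x⃗) = 2·c(x⃗)+1 for every leaf x⃗ of 𝒯 and φ₀(x⃗) = 2·φ₀(x⃗·0) for every internal node x⃗ of 𝒯. Suppose x⃗ is an internal node of 𝒯 and x⃗·z is an internal node of 𝒯 for every z ∈ ℕ. Then the maps z ↦ φ₀(x⃗·z·0) and z ↦ θ(φ₀(x⃗·z·0)) from ℕ to ℕ are injective, where θ(n) denotes the odd part of n (the unique odd number with n = 2^t·θ(n) for some t, for n ≥ 1). -/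
theorem exists_zero_leaf (T : Set (List ℕ)) (hT : IsTree T) (hwf : WFTree T)
    (v : List ℕ) (hv : v ∈ T) : ∃ n, LeafNode T (v ++ List.replicate n 0) := by
  by_contra hcon
  push Not at hcon
  have hall : ∀ n, v ++ List.replicate n 0 ∈ T := by
    intro n
    induction n with
    | zero => simpa using hv
    | succ n ih =>
      rcases hT.2.2 _ ih with h | h
      · exact absurd h (hcon n)
      · have := h.2 0
        rwa [List.append_assoc, ← List.replicate_succ'] at this
  apply hwf
  refine ⟨extSeq v 0, fun i => hT.2.1 _ (hall i) _ ?_⟩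
  have : (List.range i).map (extSeq v 0) = (v ++ List.replicate i 0).take i := by
    apply List.ext_getElem
    · simp
    · intro k h1 h2
      simp only [List.length_map, List.length_range] at h1
      simp only [List.getElem_map, List.getElem_range, extSeq, List.getElem_take,
        List.getElem_append, List.getElem_replicate]
      split_ifs with h
      · simp [h]
      · simp [not_lt.mp h]
  rw [this]
  exact List.take_prefix _ _

theorem phi_of_zero_leaf (T : Set (List ℕ)) (hT : IsTree T)
    (c φ₀ : List ℕ → ℕ)
    (hleaf : ∀ v, LeafNode T v → φ₀ v = 2 * c v + 1)
    (hint : ∀ v, InternalNode T v → φ₀ v = 2 * φ₀ (v ++ [0])) (n : ℕ) :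
    ∀ v, LeafNode T (v ++ List.replicate n 0) →
      φ₀ v = 2 ^ n * (2 * c (v ++ List.replicate n 0) + 1) := by
  induction n with
  | zero => intro v h; simpa using hleaf v (by simpa using h)
  | succ n ih =>
    intro v h
    have e : v ++ List.replicate (n + 1) 0 = (v ++ [0]) ++ List.replicate n 0 := by
      simp [List.replicate_succ]
    rw [e] at h ⊢
    have h0 : v ++ [0] ∈ T := hT.2.1 _ h.1 _ (List.prefix_append _ _)
    have hv : v ∈ T := hT.2.1 _ h0 _ (List.prefix_append _ _)
    have hi : InternalNode T v := by
      rcases hT.2.2 v hv with hl | hi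
      · exact absurd h0 (hl.2 0)
      · exact hi
    rw [hint v hi, ih _ h, pow_succ]
    ring

theorem oddPart_two_pow_mul (n k : ℕ) : oddPart (2 ^ n * (2 * k + 1)) = 2 * k + 1 := by
  have h : (2 ^ n * (2 * k + 1)).factorization 2 = n := by
    rw [Nat.factorization_mul (by positivity) (by omega)]
    have : (2 * k + 1).factorization 2 = 0 :=
      Nat.factorization_eq_zero_of_not_dvd (by omega)
    simp [this, Nat.Prime.factorization_pow Nat.prime_two]
  unfold oddPart
  rw [h]
  exact Nat.mul_div_cancel_left _ (by positivity)

theorem phi0_injective (T : Set (List ℕ)) (hT : IsTree T) (hwf : WFTree T)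
    (c : List ℕ → ℕ) (hc : Function.Injective c)
    (φ₀ : List ℕ → ℕ)
    (hleaf : ∀ v, LeafNode T v → φ₀ v = 2 * c v + 1)
    (hint : ∀ v, InternalNode T v → φ₀ v = 2 * φ₀ (v ++ [0]))
    (x : List ℕ) (hx : InternalNode T x)
    (hxz : ∀ z : ℕ, InternalNode T (x ++ [z])) :
    Function.Injective (fun z : ℕ => φ₀ (x ++ [z, 0])) ∧
    Function.Injective (fun z : ℕ => oddPart (φ₀ (x ++ [z, 0]))) := by
  have hodd : Function.Injective (fun z : ℕ => oddPart (φ₀ (x ++ [z, 0]))) := by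
    have key : ∀ z, ∃ n, oddPart (φ₀ (x ++ [z, 0])) =
        2 * c (x ++ [z, 0] ++ List.replicate n 0) + 1 := by
      intro z
      have hm : x ++ [z, 0] ∈ T := by simpa using (hxz z).2 0
      obtain ⟨n, hn⟩ := exists_zero_leaf T hT hwf _ hm
      exact ⟨n, by rw [phi_of_zero_leaf T hT c φ₀ hleaf hint n _ hn, oddPart_two_pow_mul]⟩
    intro z w h
    obtain ⟨n, hn⟩ := key z
    obtain ⟨m, hm⟩ := key w
    simp only [hn, hm] at h
    have h2 := hc (show c (x ++ [z, 0] ++ List.replicate n 0) =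
      c (x ++ [w, 0] ++ List.replicate m 0) by omega)
    simp only [List.append_assoc, List.append_cancel_left_eq, List.cons_append,
      List.cons.injEq] at h2
    exact h2.1
  exact ⟨fun z w h => hodd (congrArg oddPart h), hodd⟩
end

section
/- Let d ∈ ℕ, let k₀,…,k_d ∈ ℕ with k_i ≥ 1 for all i ≤ d, and let c be an injective function from finite sequences of naturals to ℕ. Define F∞ : (ℕ → ℕ) → ℕ by: F∞(f) = c(f(0),…,f(w)) if w is the least index ≤ d with f(w) < k_w, and F∞(f) = c(f(0),…,f(d+1)) if f(w) ≥ k_w for all w ≤ d. Then: (a) the Kohlenbach tree 𝒯^K(F∞) is well-founded and every element of it has length at most d+2; (b) every sequence (x₀,…,x_{d+1}) of length d+2 with x_i ≥ k_i for all i ≤ d belongs to 𝒯^K(F∞) and is a leaf of it; (c) every sequence x⃗ of length at most d+1 with x_i ≥ k_i for all i < |x⃗| belongs to 𝒯^K(F∞) and is an internal node of it. -/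
theorem Finf_value (d : ℕ) (k : ℕ → ℕ) (c : List ℕ → ℕ) (Finf : (ℕ → ℕ) → ℕ)
    (hF : ∀ f : ℕ → ℕ,
      (∀ w ≤ d, (∀ w' < w, k w' ≤ f w') → f w < k w →
        Finf f = c ((List.range (w + 1)).map f)) ∧
      ((∀ w ≤ d, k w ≤ f w) → Finf f = c ((List.range (d + 2)).map f)))
    (f : ℕ → ℕ) : ∃ m ≤ d + 1, (∀ i < m, k i ≤ f i) ∧ (m ≤ d → f m < k m) ∧
      Finf f = c ((List.range (m + 1)).map f) := by
  by_cases h : ∃ w, w ≤ d ∧ f w < k w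
  · classical
    have h1 := Nat.find_spec h
    have h2 : ∀ i < Nat.find h, k i ≤ f i := by
      intro i hi
      have := Nat.find_min h hi
      by_contra h3
      exact this ⟨by omega, by omega⟩
    exact ⟨Nat.find h, by omega, h2, fun _ => h1.2, (hF f).1 _ h1.1 h2 h1.2⟩
  · push Not at h
    exact ⟨d + 1, le_rfl, fun i hi => h i (by omega), fun h => by omega, (hF f).2 h⟩

theorem Finf_tree_structure (d : ℕ) (k : ℕ → ℕ) (hk : ∀ i ≤ d, 1 ≤ k i)
    (c : List ℕ → ℕ) (hc : Function.Injective c)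
    (Finf : (ℕ → ℕ) → ℕ)
    (hF : ∀ f : ℕ → ℕ,
      (∀ w ≤ d, (∀ w' < w, k w' ≤ f w') → f w < k w →
        Finf f = c ((List.range (w + 1)).map f)) ∧
      ((∀ w ≤ d, k w ≤ f w) → Finf f = c ((List.range (d + 2)).map f))) :
    (WFTree (KohTree Finf) ∧ ∀ x ∈ KohTree Finf, x.length ≤ d + 2) ∧
    (∀ x : List ℕ, x.length = d + 2 → (∀ i ≤ d, k i ≤ x.getD i 0) →
      LeafNode (KohTree Finf) x) ∧
    (∀ x : List ℕ, x.length ≤ d + 1 → (∀ i < x.length, k i ≤ x.getD i 0) →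
      InternalNode (KohTree Finf) x) := by
  have hmapne : ∀ (f g : ℕ → ℕ) (m m' n : ℕ), n ≤ m → f n ≠ g n →
      (List.range (m + 1)).map f ≠ (List.range (m' + 1)).map g := by
    intro f g m m' n hn hfg h
    have hl := congrArg List.length h
    simp at hl
    subst hl
    have := congrArg (fun l => l[n]?) h
    simp [Nat.lt_succ_of_le hn] at this
    exact hfg this
  have hnot : ∀ x : List ℕ, x.length ≤ d + 1 → (∀ i < x.length, k i ≤ x.getD i 0) →
      ¬ KohBar Finf x := by
    intro x hx hkx hb
    obtain ⟨m, hm, -, hm2, hm3⟩ := Finf_value d k c Finf hF (extSeq x 0)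
    obtain ⟨m', hm', -, -, hm3'⟩ := Finf_value d k c Finf hF (extSeq x 1)
    unfold KohBar at hb
    rw [hm3, hm3'] at hb
    refine hmapne _ _ m m' x.length ?_ ?_ (hc hb)
    · by_contra hlt
      have h1 := hm2 (by omega)
      have h2 := hkx m (by omega)
      unfold extSeq at h1
      omega
    · simp [extSeq]
  have hbar : ∀ x : List ℕ, x.length = d + 2 → KohBar Finf x := by
    intro x hx
    have hag : ∀ i < d + 2, extSeq x 0 i = extSeq x 1 i := by
      intro i hi
      have : i < x.length := by omega
      simp [extSeq, this]
    obtain ⟨m, hm, h1, h2, h3⟩ := Finf_value d k c Finf hF (extSeq x 0)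
    obtain ⟨m', hm', h1', h2', h3'⟩ := Finf_value d k c Finf hF (extSeq x 1)
    have hmm : m = m' := by
      rcases lt_trichotomy m m' with h | h | h
      · have a := h1' m h
        have b := h2 (by omega)
        rw [hag m (by omega)] at b
        omega
      · exact h
      · have a := h1 m' h
        have b := h2' (by omega)
        rw [hag m' (by omega)] at a
        omega
    subst hmm
    unfold KohBar
    rw [h3, h3']
    congr 1
    apply List.map_congr_left
    intro i hi
    exact hag i (by have := List.mem_range.1 hi; omega)
  have hlen : ∀ x ∈ KohTree Finf, x.length ≤ d + 2 := by
    intro x hx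
    by_contra hlt
    have hl : (x.take (d + 2)).length = d + 2 := by
      rw [List.length_take]; omega
    refine hx (x.take (d + 2)) (List.take_prefix _ _) ?_ (hbar _ hl)
    intro h
    rw [h] at hl
    omega
  have hmem : ∀ x : List ℕ, x.length ≤ d + 2 →
      (∀ i, i + 1 < x.length → k i ≤ x.getD i 0) → x ∈ KohTree Finf := by
    intro x hx hkx y hy hne
    have hlt : y.length < x.length :=
      lt_of_le_of_ne hy.length_le fun h => hne (hy.eq_of_length h)
    apply hnot y (by omega)
    intro i hi
    have h := hkx i (by omega)
    obtain ⟨t, rfl⟩ := hy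
    rwa [List.getD_append _ _ _ _ hi] at h
  refine ⟨⟨?_, hlen⟩, ?_, ?_⟩
  · rintro ⟨x, hx⟩
    have := hlen _ (hx (d + 3))
    simp at this
  · intro x hx hkx
    refine ⟨hmem x (by omega) fun i hi => hkx i (by omega), fun y hy => ?_⟩
    have := hlen _ hy
    simp at this
    omega
  · intro x hx hkx
    refine ⟨hmem x (by omega) fun i hi => hkx i (by omega), fun y => hmem _ ?_ ?_⟩
    · simp; omega
    · intro i hi
      have hi' : i < x.length := by simpa using hi
      rw [List.getD_append _ _ _ _ hi']
      exact hkx i hi'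
end
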